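/- Let T = ⋃_{k=1}^L Tₖ be a compact set, where each Tₖ = { x ∈ ℝⁿ : fᵏ₁(x) ≥ 0, …, fᵏ_{mₖ}(x) ≥ 0 } is defined by real polynomials fᵏᵢ. Suppose that for every u ∈ ∂_cT and every pair (k, i) with fᵏᵢ(u) = 0: (1) Tₖ has nonempty interior near u, i.e., for every δ > 0 there exists v ∈ B(u, δ) with fᵏⱼ(v) > 0 for all j = 1, …, mₖ; and (2) fᵏᵢ is either sos-concave or strictly quasi-concave at u. Then conv(T) is SDP representable. -/

import Mathlib

open MvPolynomial Metric Set Pointwise Filter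

noncomputable section

/-- `ℝⁿ` with the Euclidean norm. -/
abbrev Rn (n : ℕ) : Type := EuclideanSpace ℝ (Fin n)

/-- A set `S ⊆ ℝⁿ` is SDP representable if it is the projection of a spectrahedron:
there are symmetric matrices `A₀, A i, B j` with
`S = { x | ∃ u, A₀ + Σ xᵢ Aᵢ + Σ uⱼ Bⱼ ⪰ 0 }`. -/
def IsSDPRepresentable {n : ℕ} (S : Set (Rn n)) : Prop :=
  ∃ (N d : ℕ) (A₀ : Matrix (Fin d) (Fin d) ℝ)
    (A : Fin n → Matrix (Fin d) (Fin d) ℝ) (B : Fin N → Matrix (Fin d) (Fin d) ℝ),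
    A₀.IsSymm ∧ (∀ i, (A i).IsSymm) ∧ (∀ j, (B j).IsSymm) ∧
    S = {x : Rn n | ∃ u : Fin N → ℝ,
      (A₀ + ∑ i, x i • A i + ∑ j, u j • B j).PosSemidef}

/-- Evaluation of a polynomial at a point of `ℝⁿ`. -/
def peval {n : ℕ} (g : MvPolynomial (Fin n) ℝ) (x : Rn n) : ℝ :=
  MvPolynomial.eval (fun i => x i) g

/-- The gradient `∇g(u)` of a polynomial. -/
def pgrad {n : ℕ} (g : MvPolynomial (Fin n) ℝ) (u : Rn n) : Fin n → ℝ :=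
  fun i => MvPolynomial.eval (fun j => u j) (MvPolynomial.pderiv i g)

/-- The Hessian `∇²g(u)` of a polynomial. -/
def phess {n : ℕ} (g : MvPolynomial (Fin n) ℝ) (u : Rn n) : Matrix (Fin n) (Fin n) ℝ :=
  Matrix.of fun i j =>
    MvPolynomial.eval (fun k => u k) (MvPolynomial.pderiv i (MvPolynomial.pderiv j g))

/-- A polynomial `g` is sos-concave if `-∇²g(x) = W(x)ᵀ W(x)` for some
(possibly nonsquare) matrix polynomial `W`. -/
def SosConcave {n : ℕ} (g : MvPolynomial (Fin n) ℝ) : Prop :=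
  ∃ (k : ℕ) (W : Fin k → Fin n → MvPolynomial (Fin n) ℝ),
    ∀ i j, - MvPolynomial.pderiv i (MvPolynomial.pderiv j g) = ∑ l, W l i * W l j

/-- `g` is quasi-concave at `u` : `-vᵀ∇²g(u)v ≥ 0` for every `v` with `∇g(u)ᵀv = 0`. -/
def QuasiConcaveAt {n : ℕ} (g : MvPolynomial (Fin n) ℝ) (u : Rn n) : Prop :=
  ∀ v : Fin n → ℝ, (∑ i, pgrad g u i * v i) = 0 →
    0 ≤ -(∑ i, ∑ j, v i * phess g u i j * v j)

/-- `g` is strictly quasi-concave at `u` : if `∇g(u) ≠ 0` then `-vᵀ∇²g(u)v > 0`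
for all nonzero `v ⊥ ∇g(u)`; if `∇g(u) = 0` then `-∇²g(u)` is positive definite. -/
def StrictlyQuasiConcaveAt {n : ℕ} (g : MvPolynomial (Fin n) ℝ) (u : Rn n) : Prop :=
  (pgrad g u ≠ 0 ∧ ∀ v : Fin n → ℝ, v ≠ 0 → (∑ i, pgrad g u i * v i) = 0 →
      0 < -(∑ i, ∑ j, v i * phess g u i j * v j)) ∨
  (pgrad g u = 0 ∧ (-(phess g u)).PosDef)

/-- The convex boundary `∂_c T` : points of `T` minimizing some unit linear functional. -/
def convexBoundary {n : ℕ} (T : Set (Rn n)) : Set (Rn n) :=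
  {u ∈ T | ∃ l : Rn n, ‖l‖ = 1 ∧ ∀ x ∈ T, (∑ i, l i * u i) ≤ ∑ i, l i * x i}

/-- `v` is a nonsingular point of `∂T` (w.r.t. defining polynomials `g`):
exactly one defining polynomial vanishes at `v`, with nonvanishing gradient. -/
def IsNonsingularBoundaryPoint {n m : ℕ} (g : Fin m → MvPolynomial (Fin n) ℝ)
    (T : Set (Rn n)) (v : Rn n) : Prop :=
  v ∈ frontier T ∧ ∃ i, peval (g i) v = 0 ∧ pgrad (g i) v ≠ 0 ∧
    ∀ j, peval (g j) v = 0 → j = i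

/-- A polynomial is SOS if it is a finite sum of squares of polynomials. -/
def IsSOSPoly {n : ℕ} (p : MvPolynomial (Fin n) ℝ) : Prop :=
  ∃ (k : ℕ) (q : Fin k → MvPolynomial (Fin n) ℝ), p = ∑ i, (q i) ^ 2

/-- The polynomial `δ² - ‖x - u‖²`. -/
def ballPoly {n : ℕ} (u : Rn n) (δ : ℝ) : MvPolynomial (Fin n) ℝ :=
  MvPolynomial.C (δ ^ 2) - ∑ i, (MvPolynomial.X i - MvPolynomial.C (u i)) ^ 2

/-- The family `h₁, …, h_{m₂}` extended by the ball polynomial `h_m(x) = δ² - ‖x-u‖²`. -/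
def extFamily {n m2 : ℕ} (h : Fin m2 → MvPolynomial (Fin n) ℝ) (u : Rn n) (δ : ℝ) :
    Fin (m2 + 1) → MvPolynomial (Fin n) ℝ :=
  Fin.snoc h (ballPoly u δ)

/-- The positive definite Lagrange Hessian (PDLH) condition at `u` with radius `δu`,
for the set `T = {x | f(x) = 0, h(x) ≥ 0}`. -/
def PDLHAt {n m1 m2 : ℕ} (f : Fin m1 → MvPolynomial (Fin n) ℝ)
    (h : Fin m2 → MvPolynomial (Fin n) ℝ) (T : Set (Rn n)) (u : Rn n) (δu : ℝ) : Prop :=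
  ∀ l : Rn n, ‖l‖ = 1 → ∀ δ : ℝ, 0 < δ → δ ≤ δu →
    ∀ v ∈ T ∩ closedBall u δ,
      (∀ x ∈ T ∩ closedBall u δ, (∑ i, l i * v i) ≤ ∑ i, l i * x i) →
      ∃ (lam : Fin m1 → ℝ) (mu : Fin (m2 + 1) → ℝ),
        (∀ j, 0 ≤ mu j) ∧
        (∀ j, mu j * peval (extFamily h u δ j) v = 0) ∧
        (∀ i, l i = (∑ k, lam k * pgrad (f k) v i) +
            ∑ j, mu j * pgrad (extFamily h u δ j) v i) ∧
        ∀ x ∈ closedBall u δ,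
          (Matrix.of (fun i i' : Fin n =>
            -(∑ k, lam k * phess (f k) x i i') -
              ∑ j, mu j * phess (extFamily h u δ j) x i i')).PosDef

/-- `Z(g) ∩ ∂S` has strictly convex shape with respect to `S`. -/
def StrictlyConvexShape {n : ℕ} (g : MvPolynomial (Fin n) ℝ) (S : Set (Rn n)) : Prop :=
  ∃ Y U : Set (Rn n), IsOpen U ∧ Y = {x | peval g x = 0} ∩ U ∧
    {x | peval g x = 0} ∩ frontier S ⊆ Y ∧
    (∀ p ∈ closure Y, pgrad g p ≠ 0) ∧
    ∀ p ∈ closure Y,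
      (∃ ε : ℝ, (ε = 1 ∨ ε = -1) ∧
        ∀ q ∈ S ∪ closure Y, ε * (∑ i, pgrad g p i * (q i - p i)) ≤ 0) ∧
      ∀ q ∈ S ∪ closure Y, (∑ i, pgrad g p i * (q i - p i)) = 0 → q = p

/-! ### Spectrahedral cones -/

/-- A spectrahedral cone in a real vector space. -/
def SpecCone {E : Type} [AddCommGroup E] [Module ℝ E] (K : Set E) : Prop :=
  ∃ (ι : Type) (_ : Fintype ι) (Φ : E →ₗ[ℝ] Matrix ι ι ℝ),
    (∀ e, (Φ e).IsSymm) ∧ K = {e | (Φ e).PosSemidef}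

theorem posSemidef_iff_real {ι : Type} [Fintype ι] {M : Matrix ι ι ℝ} (hM : M.IsSymm) :
    M.PosSemidef ↔ ∀ c : ι → ℝ, 0 ≤ ∑ i, ∑ j, c i * c j * M i j := by
  rw [Matrix.posSemidef_iff_dotProduct_mulVec]
  constructor
  · rintro ⟨-, h⟩ c
    have := h c
    simp only [dotProduct, Matrix.mulVec, Finset.mul_sum] at this
    refine this.trans_eq (Finset.sum_congr rfl fun i _ => Finset.sum_congr rfl fun j _ => ?_)
    simp; ring
  · intro h
    refine ⟨by rw [Matrix.IsHermitian, Matrix.conjTranspose_eq_transpose_of_trivial]; exact hM, fun c => ?_⟩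
    refine (h c).trans_eq ?_
    simp only [dotProduct, Matrix.mulVec, Finset.mul_sum]
    refine (Finset.sum_congr rfl fun i _ => Finset.sum_congr rfl fun j _ => ?_)
    simp; ring

section cones
variable {E F : Type} [AddCommGroup E] [Module ℝ E] [AddCommGroup F] [Module ℝ F]

theorem SpecCone.inter {K K' : Set E} (h : SpecCone K) (h' : SpecCone K') :
    SpecCone (K ∩ K') := by
  obtain ⟨ι, _, Φ, hs, rfl⟩ := h
  obtain ⟨ι', _, Φ', hs', rfl⟩ := h'
  have hsy : ∀ e, (Matrix.fromBlocks (Φ e) 0 0 (Φ' e)).IsSymm := fun e =>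
    Matrix.IsSymm.fromBlocks (hs e) (by simp) (hs' e)
  refine ⟨ι ⊕ ι', inferInstance,
    { toFun := fun e => Matrix.fromBlocks (Φ e) 0 0 (Φ' e)
      map_add' := fun a b => by simp [Matrix.fromBlocks_add]
      map_smul' := fun a b => by simp [Matrix.fromBlocks_smul] }, hsy, ?_⟩
  ext e
  simp only [Set.mem_inter_iff, Set.mem_ofPred_eq, LinearMap.coe_mk, AddHom.coe_mk]
  rw [posSemidef_iff_real (hs e), posSemidef_iff_real (hs' e), posSemidef_iff_real (hsy e)]
  constructor
  · rintro ⟨h1, h2⟩ c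
    simpa using add_nonneg (h1 fun i => c (Sum.inl i)) (h2 fun i => c (Sum.inr i))
  · intro h
    exact ⟨fun c => by simpa using h (Sum.elim c 0), fun c => by simpa using h (Sum.elim 0 c)⟩

theorem SpecCone.preimage {K : Set F} (h : SpecCone K) (g : E →ₗ[ℝ] F) :
    SpecCone {e | g e ∈ K} := by
  obtain ⟨ι, _, Φ, hs, rfl⟩ := h
  exact ⟨ι, inferInstance, Φ.comp g, fun e => hs _, rfl⟩

theorem SpecCone.univ : SpecCone (Set.univ : Set E) :=
  ⟨Empty, inferInstance, 0, fun e => by ext i; exact i.elim, by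
    ext e; simp [Matrix.PosSemidef.zero]⟩

theorem SpecCone.nonneg (g : E →ₗ[ℝ] ℝ) : SpecCone {e | 0 ≤ g e} := by
  have hs : ∀ e, (Matrix.of fun _ _ : Unit => g e).IsSymm := fun e => by ext; simp
  refine ⟨Unit, inferInstance,
    { toFun := fun e => Matrix.of fun _ _ => g e
      map_add' := fun a b => by ext; simp
      map_smul' := fun a b => by ext; simp }, hs, ?_⟩
  ext e
  simp only [Set.mem_ofPred_eq, LinearMap.coe_mk, AddHom.coe_mk]
  rw [posSemidef_iff_real (hs e)]
  constructor
  · intro h c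
    simpa using mul_nonneg (mul_self_nonneg (c ())) h
  · intro h
    simpa using h 1

theorem SpecCone.eq_zero (g : E →ₗ[ℝ] ℝ) : SpecCone {e | g e = 0} := by
  have := (SpecCone.nonneg g).inter (SpecCone.nonneg (-g))
  convert this using 1
  ext e
  simp only [Set.mem_ofPred_eq, Set.mem_inter_iff, LinearMap.neg_apply]
  constructor
  · intro h; simp [h]
  · rintro ⟨h1, h2⟩; linarith

theorem SpecCone.finset {α : Type*} (s : Finset α) (K : α → Set E)
    (h : ∀ a ∈ s, SpecCone (K a)) : SpecCone {e | ∀ a ∈ s, e ∈ K a} := by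
  classical
  induction s using Finset.induction_on with
  | empty => simpa using SpecCone.univ
  | insert a s ha ih =>
    have := (h a (by simp)).inter (ih fun b hb => h b (by simp [hb]))
    convert this using 1
    ext e; simp

theorem SpecCone.forall {α : Type*} [Finite α] (K : α → Set E)
    (h : ∀ a, SpecCone (K a)) : SpecCone {e | ∀ a, e ∈ K a} := by
  have := Fintype.ofFinite α
  simpa using SpecCone.finset Finset.univ K fun a _ => h a

theorem SpecCone.eq {n : ℕ} (g g' : E →ₗ[ℝ] Rn n) : SpecCone {e | g e = g' e} := by
  have := SpecCone.forall (fun (i : Fin n) => {e : E | (g e - g' e) i = 0})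
    fun i => SpecCone.eq_zero ((EuclideanSpace.proj i).toLinearMap.comp (g - g'))
  convert this using 1
  ext e
  simp only [Set.mem_ofPred_eq]
  constructor
  · intro h i; simp [h]
  · intro h; ext i; have := h i; simp at this; linarith

theorem SpecCone.zero_mem {K : Set E} (h : SpecCone K) : (0 : E) ∈ K := by
  obtain ⟨ι, _, Φ, hs, rfl⟩ := h
  simp [Matrix.PosSemidef.zero]

theorem SpecCone.add_mem {K : Set E} (h : SpecCone K) {a b : E} (ha : a ∈ K) (hb : b ∈ K) :
    a + b ∈ K := by
  obtain ⟨ι, _, Φ, hs, rfl⟩ := h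
  simp only [Set.mem_ofPred_eq, map_add] at *
  exact ha.add hb

theorem SpecCone.smul_mem {K : Set E} (h : SpecCone K) {a : E} (ha : a ∈ K) {t : ℝ} (ht : 0 ≤ t) :
    t • a ∈ K := by
  obtain ⟨ι, _, Φ, hs, rfl⟩ := h
  simp only [Set.mem_ofPred_eq, map_smul] at *
  exact ha.smul ht

end cones

/-- Projection of an affine slice of a spectrahedral cone. -/
def SDPc {n : ℕ} (S : Set (Rn n)) : Prop :=
  ∃ (E : Type) (_ : AddCommGroup E) (_ : Module ℝ E) (K : Set E) (h : E →ₗ[ℝ] ℝ)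
    (p : E →ₗ[ℝ] Rn n), SpecCone K ∧ S = {x | ∃ e ∈ K, h e = 1 ∧ p e = x}

theorem SDPc.isSDPRepresentable {n : ℕ} {S : Set (Rn n)} (hS : SDPc S) :
    IsSDPRepresentable S := by
  obtain ⟨E, _, _, K, h, p, hK, rfl⟩ := hS
  have h3 : SpecCone ({q : E × ℝ × Rn n | q.1 ∈ K} ∩
      ({q : E × ℝ × Rn n | h q.1 - q.2.1 = 0} ∩ {q : E × ℝ × Rn n | p q.1 = q.2.2})) :=
    (hK.preimage (LinearMap.fst ℝ E (ℝ × Rn n))).inter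
      ((SpecCone.eq_zero (h.comp (LinearMap.fst ℝ E (ℝ × Rn n)) -
        (LinearMap.fst ℝ ℝ (Rn n)).comp (LinearMap.snd ℝ E (ℝ × Rn n)))).inter
      (SpecCone.eq (p.comp (LinearMap.fst ℝ E (ℝ × Rn n)))
        ((LinearMap.snd ℝ ℝ (Rn n)).comp (LinearMap.snd ℝ E (ℝ × Rn n)))))
  obtain ⟨ι, _, Φ, hs, hΦ⟩ := h3
  let r := Fintype.equivFin ι
  let Ψ : E × ℝ × Rn n →ₗ[ℝ] Matrix (Fin (Fintype.card ι)) (Fin (Fintype.card ι)) ℝ :=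
    (Matrix.reindexLinearEquiv ℝ ℝ r r).toLinearMap.comp Φ
  have hΨs : ∀ e, (Ψ e).IsSymm := fun e => by
    have := (hs e).submatrix r.symm
    simpa [Ψ] using this
  have hΨ : ∀ q, (Ψ q).PosSemidef ↔ (q.1 ∈ K ∧ h q.1 = q.2.1 ∧ p q.1 = q.2.2) := fun q => by
    have h1 : (Ψ q).PosSemidef ↔ (Φ q).PosSemidef := by
      simpa [Ψ] using Matrix.posSemidef_submatrix_equiv r.symm
    rw [h1]
    have h2 := Set.ext_iff.1 hΦ q
    simp only [Set.mem_ofPred_eq, Set.mem_inter_iff, sub_eq_zero] at h2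
    exact h2.symm
  let G := Ψ.comp (LinearMap.inl ℝ E (ℝ × Rn n))
  let b := Module.finBasis ℝ (LinearMap.range G)
  refine ⟨_, _, Ψ (0, 1, 0), fun i => Ψ (0, 0, EuclideanSpace.single i 1),
    fun j => (b j : Matrix _ _ ℝ), hΨs _, fun _ => hΨs _, fun j => ?_, ?_⟩
  · obtain ⟨e, he⟩ := (b j).2
    simp only [← he]; exact hΨs _
  ext x
  have key : ∀ e : E, Ψ (0, 1, 0) + ∑ i, x i • Ψ (0, 0, EuclideanSpace.single i 1) + G e
      = Ψ (e, 1, x) := by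
    intro e
    have hx : x = ∑ i, x i • (EuclideanSpace.single i 1 : Rn n) := by
      ext j
      simp [Pi.single_apply]
    simp only [G, LinearMap.comp_apply, LinearMap.inl_apply, ← map_smul, ← map_sum, ← map_add]
    congr 1
    ext1
    · simp [Prod.fst_sum]
    · ext1
      · simp [Prod.fst_sum, Prod.snd_sum]
      · simp only [Prod.snd_add, Prod.snd_sum, Prod.snd_smul, Prod.smul_mk]
        simp [← hx]
  simp only [Set.mem_ofPred_eq]
  constructor
  · rintro ⟨e, he, h1, h2⟩
    refine ⟨fun j => b.repr ⟨G e, e, rfl⟩ j, ?_⟩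
    have h5 : ∑ j, b.repr ⟨G e, e, rfl⟩ j • (b j : Matrix _ _ ℝ) = G e := by
      have := congrArg (LinearMap.range G).subtype (b.sum_repr ⟨G e, e, rfl⟩)
      rw [map_sum] at this
      exact this
    rw [h5, key, hΨ]
    exact ⟨he, h1, h2⟩
  · rintro ⟨u, hu⟩
    obtain ⟨e, he⟩ := (∑ j, u j • b j : LinearMap.range G).2
    have h5 : ∑ j, u j • (b j : Matrix _ _ ℝ) = G e := by
      rw [he]; simp
    rw [h5, key, hΨ] at hu
    exact ⟨e, hu⟩

theorem SDPc.inter {n : ℕ} {S S' : Set (Rn n)} (hS : SDPc S) (hS' : SDPc S') :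
    SDPc (S ∩ S') := by
  obtain ⟨E, _, _, K, h, p, hK, rfl⟩ := hS
  obtain ⟨E', _, _, K', h', p', hK', rfl⟩ := hS'
  refine ⟨E × E', inferInstance, inferInstance,
    ({q | q.1 ∈ K} ∩ {q | q.2 ∈ K'}) ∩ ({q | h q.1 - h' q.2 = 0} ∩ {q | p q.1 = p' q.2}),
    h.comp (LinearMap.fst ℝ E E'), p.comp (LinearMap.fst ℝ E E'),
    ((hK.preimage (LinearMap.fst ℝ E E')).inter (hK'.preimage (LinearMap.snd ℝ E E'))).inter
    ((SpecCone.eq_zero (h.comp (LinearMap.fst ℝ E E') - h'.comp (LinearMap.snd ℝ E E'))).inter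
    (SpecCone.eq (p.comp (LinearMap.fst ℝ E E')) (p'.comp (LinearMap.snd ℝ E E')))), ?_⟩
  ext x
  simp only [Set.mem_inter_iff, Set.mem_ofPred_eq, LinearMap.comp_apply, LinearMap.fst_apply,
    Prod.exists]
  constructor
  · rintro ⟨⟨e, he, h1, h2⟩, e', he', h1', h2'⟩
    exact ⟨e, e', ⟨⟨he, he'⟩, by rw [h1, h1']; simp, by rw [h2, h2']⟩, h1, h2⟩
  · rintro ⟨e, e', ⟨⟨he, he'⟩, h3, h4⟩, h1, h2⟩
    exact ⟨⟨e, he, h1, h2⟩, e', he', by linarith, by rw [← h4, h2]⟩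

theorem SDPc.finset {n : ℕ} {α : Type*} (s : Finset α) (B : Set (Rn n)) (hB : SDPc B)
    (S : α → Set (Rn n)) (h : ∀ a ∈ s, SDPc (S a)) : SDPc (B ∩ {x | ∀ a ∈ s, x ∈ S a}) := by
  classical
  induction s using Finset.induction_on with
  | empty => simpa using hB
  | insert a s ha ih =>
    have := (h a (by simp)).inter (ih fun b hb => h b (by simp [hb]))
    convert this using 1
    ext e; simp; tauto

theorem SDPc.forall {n : ℕ} {α : Type*} [Finite α] (B : Set (Rn n)) (hB : SDPc B)
    (S : α → Set (Rn n)) (h : ∀ a, SDPc (S a)) : SDPc (B ∩ {x | ∀ a, x ∈ S a}) := by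
  have := Fintype.ofFinite α
  simpa using SDPc.finset Finset.univ B hB S fun a _ => h a

theorem SDPc.univ {n : ℕ} : SDPc (Set.univ : Set (Rn n)) :=
  ⟨ℝ × Rn n, inferInstance, inferInstance, Set.univ, LinearMap.fst ℝ ℝ (Rn n),
    LinearMap.snd ℝ ℝ (Rn n), SpecCone.univ, by ext x; simp⟩

theorem SDPc.empty {n : ℕ} : SDPc (∅ : Set (Rn n)) :=
  ⟨ℝ, inferInstance, inferInstance, Set.univ, 0, 0, SpecCone.univ, by ext x; simp⟩

theorem SDPc.halfspace {n : ℕ} (l : Rn n →ₗ[ℝ] ℝ) (c : ℝ) : SDPc {x : Rn n | l x ≤ c} := by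
  refine ⟨ℝ × Rn n, inferInstance, inferInstance, _, LinearMap.fst ℝ ℝ (Rn n),
    LinearMap.snd ℝ ℝ (Rn n), SpecCone.nonneg (c • LinearMap.fst ℝ ℝ (Rn n) -
      l.comp (LinearMap.snd ℝ ℝ (Rn n))), ?_⟩
  ext x; simp

theorem SDPc.convex {n : ℕ} {S : Set (Rn n)} (hS : SDPc S) : Convex ℝ S := by
  obtain ⟨E, _, _, K, h, p, hK, rfl⟩ := hS
  rintro x ⟨e, he, h1, rfl⟩ y ⟨e', he', h1', rfl⟩ a b ha hb hab
  exact ⟨a • e + b • e', hK.add_mem (hK.smul_mem he ha) (hK.smul_mem he' hb), by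
    simp [h1, h1', hab], by simp⟩

theorem recession_zero {n : ℕ} {E : Type} [AddCommGroup E] [Module ℝ E] {K : Set E}
    {h : E →ₗ[ℝ] ℝ} {p : E →ₗ[ℝ] Rn n} (hK : SpecCone K)
    (hb : Bornology.IsBounded {x | ∃ e ∈ K, h e = 1 ∧ p e = x})
    (hne : {x | ∃ e ∈ K, h e = 1 ∧ p e = x}.Nonempty) {e : E} (he : e ∈ K) (h0 : h e = 0) :
    p e = 0 := by
  obtain ⟨x, e0, he0, h1, rfl⟩ := hne
  obtain ⟨C, hC⟩ := hb.exists_norm_le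
  by_contra hne
  have hpos : 0 < ‖p e‖ := norm_pos_iff.2 hne
  have hC0 : 0 ≤ C := (norm_nonneg _).trans (hC _ ⟨e0, he0, h1, rfl⟩)
  set t : ℝ := (2 * C + 1) / ‖p e‖
  have ht : 0 ≤ t := by positivity
  have h2 := hC (p (e0 + t • e)) ⟨e0 + t • e, hK.add_mem he0 (hK.smul_mem he ht), by
    simp [h1, h0], rfl⟩
  have h3 := hC _ ⟨e0, he0, h1, rfl⟩
  have h4 : ‖t • p e‖ = 2 * C + 1 := by
    rw [norm_smul, Real.norm_of_nonneg ht]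
    exact div_mul_cancel₀ _ hpos.ne'
  have h5 : t • p e = p (e0 + t • e) - p e0 := by simp
  have := norm_sub_le (p (e0 + t • e)) (p e0)
  rw [← h5, h4] at this
  linarith

theorem SDPc.convexHull_union {n : ℕ} {S S' : Set (Rn n)} (hS : SDPc S) (hS' : SDPc S')
    (hb : Bornology.IsBounded S) (hb' : Bornology.IsBounded S') :
    SDPc (convexHull ℝ (S ∪ S')) := by
  rcases S.eq_empty_or_nonempty with rfl | hne
  · rw [Set.empty_union, hS'.convex.convexHull_eq]; exact hS'
  rcases S'.eq_empty_or_nonempty with rfl | hne'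
  · rw [Set.union_empty, hS.convex.convexHull_eq]; exact hS
  rw [hS.convex.convexHull_union hS'.convex hne hne']
  obtain ⟨E, _, _, K, h, p, hK, rfl⟩ := hS
  obtain ⟨E', _, _, K', h', p', hK', rfl⟩ := hS'
  refine ⟨E × E', inferInstance, inferInstance,
    ({q | q.1 ∈ K} ∩ {q | q.2 ∈ K'}) ∩ ({q | 0 ≤ h q.1} ∩ {q | 0 ≤ h' q.2}),
    h.coprod h', p.coprod p',
    ((hK.preimage (LinearMap.fst ℝ E E')).inter (hK'.preimage (LinearMap.snd ℝ E E'))).inter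
    ((SpecCone.nonneg (h.comp (LinearMap.fst ℝ E E'))).inter
    (SpecCone.nonneg (h'.comp (LinearMap.snd ℝ E E')))), ?_⟩
  have aux : ∀ e ∈ K, 0 ≤ h e → ∃ y ∈ {x | ∃ e ∈ K, h e = 1 ∧ p e = x}, p e = h e • y := by
    intro e he h0
    rcases h0.eq_or_lt with h0 | h0
    · obtain ⟨y, hy⟩ := hne
      exact ⟨y, hy, by rw [recession_zero hK hb ⟨y, hy⟩ he h0.symm, ← h0]; simp⟩
    · exact ⟨(h e)⁻¹ • p e, ⟨(h e)⁻¹ • e, hK.smul_mem he (by positivity), by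
        simp [h0.ne'], by simp⟩, by rw [smul_smul, mul_inv_cancel₀ h0.ne', one_smul]⟩
  have aux' : ∀ e ∈ K', 0 ≤ h' e → ∃ y ∈ {x | ∃ e ∈ K', h' e = 1 ∧ p' e = x}, p' e = h' e • y := by
    intro e he h0
    rcases h0.eq_or_lt with h0 | h0
    · obtain ⟨y, hy⟩ := hne'
      exact ⟨y, hy, by rw [recession_zero hK' hb' ⟨y, hy⟩ he h0.symm, ← h0]; simp⟩
    · exact ⟨(h' e)⁻¹ • p' e, ⟨(h' e)⁻¹ • e, hK'.smul_mem he (by positivity), by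
        simp [h0.ne'], by simp⟩, by rw [smul_smul, mul_inv_cancel₀ h0.ne', one_smul]⟩
  ext x
  rw [mem_convexJoin]
  constructor
  · rintro ⟨_, ⟨e, he, h1, rfl⟩, _, ⟨e', he', h1', rfl⟩, a, b, ha, hb, hab, rfl⟩
    refine ⟨(a • e, b • e'), ⟨⟨hK.smul_mem he ha, hK'.smul_mem he' hb⟩, ?_, ?_⟩, ?_, ?_⟩ <;>
      simp [h1, h1', ha, hb, hab]
  · rintro ⟨⟨e, e'⟩, ⟨⟨he, he'⟩, h1, h1'⟩, h2, rfl⟩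
    obtain ⟨y, hy, hye⟩ := aux e he h1
    obtain ⟨y', hy', hye'⟩ := aux' e' he' h1'
    refine ⟨y, hy, y', hy', h e, h' e', h1, h1', by simpa using h2, ?_⟩
    simp [hye, hye']

theorem isCompact_convexHull_union {n : ℕ} {S S' : Set (Rn n)} (hS : IsCompact S)
    (hS' : IsCompact S') (hc : Convex ℝ S) (hc' : Convex ℝ S') :
    IsCompact (convexHull ℝ (S ∪ S')) := by
  rcases S.eq_empty_or_nonempty with rfl | hne
  · rw [Set.empty_union, hc'.convexHull_eq]; exact hS'
  rcases S'.eq_empty_or_nonempty with rfl | hne'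
  · rw [Set.union_empty, hc.convexHull_eq]; exact hS
  rw [hc.convexHull_union hc' hne hne']
  have h1 : IsCompact ((fun q : Rn n × Rn n × ℝ => (1 - q.2.2) • q.1 + q.2.2 • q.2.1) ''
      (S ×ˢ S' ×ˢ Set.Icc (0 : ℝ) 1)) :=
    (hS.prod (hS'.prod isCompact_Icc)).image (by fun_prop)
  convert h1 using 1
  ext x
  rw [mem_convexJoin]
  constructor
  · rintro ⟨y, hy, y', hy', a, b, ha, hb, hab, rfl⟩
    exact ⟨(y, y', b), ⟨hy, hy', hb, by linarith⟩, by simp [← hab]⟩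
  · rintro ⟨⟨y, y', b⟩, ⟨hy, hy', hb, hb1⟩, rfl⟩
    exact ⟨y, hy, y', hy', 1 - b, b, by simpa using hb1, hb, by ring, rfl⟩

theorem SDPc.convexHull_finset {n : ℕ} {α : Type*} (s : Finset α) (S : α → Set (Rn n))
    (h : ∀ a ∈ s, SDPc (S a)) (hc : ∀ a ∈ s, IsCompact (S a)) :
    SDPc (convexHull ℝ (⋃ a ∈ s, S a)) ∧ IsCompact (convexHull ℝ (⋃ a ∈ s, S a)) := by
  classical
  induction s using Finset.induction_on with
  | empty => simpa using SDPc.empty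
  | insert a s ha ih =>
    obtain ⟨h1, h2⟩ := ih (fun b hb => h b (by simp [hb])) (fun b hb => hc b (by simp [hb]))
    have h3 := h a (by simp)
    have h4 := hc a (by simp)
    rw [Finset.set_biUnion_insert, ← convexHull_convexHull_union_right]
    exact ⟨h3.convexHull_union h1 h4.isBounded h2.isBounded,
      isCompact_convexHull_union h4 h2 h3.convex h1.convex⟩

/-! ### Moment cones and a Jensen inequality -/

theorem momentCone {n : ℕ} (Q : Submodule ℝ (MvPolynomial (Fin n) ℝ)) (hQ : Q.FG)
    (p : MvPolynomial (Fin n) ℝ) :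
    SpecCone {L : MvPolynomial (Fin n) ℝ →ₗ[ℝ] ℝ | ∀ q ∈ Q, 0 ≤ L (p * (q * q))} := by
  have : Module.Finite ℝ Q := Module.Finite.iff_fg.2 hQ
  let b := Module.finBasis ℝ Q
  have hs : ∀ L : MvPolynomial (Fin n) ℝ →ₗ[ℝ] ℝ,
      (Matrix.of fun i j => L (p * ((b i : MvPolynomial (Fin n) ℝ) * b j))).IsSymm := fun L => by
    ext i j
    simp [mul_comm]
  refine ⟨Fin (Module.finrank ℝ Q), inferInstance,
    { toFun := fun L => Matrix.of fun i j => L (p * ((b i : MvPolynomial (Fin n) ℝ) * b j))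
      map_add' := fun _ _ => by ext; simp
      map_smul' := fun _ _ => by ext; simp }, hs, ?_⟩
  ext L
  simp only [Set.mem_ofPred_eq, LinearMap.coe_mk, AddHom.coe_mk]
  rw [posSemidef_iff_real (hs L)]
  have key : ∀ c : Fin (Module.finrank ℝ Q) → ℝ,
      ∑ i, ∑ j, c i * c j * (Matrix.of fun i j =>
        L (p * ((b i : MvPolynomial (Fin n) ℝ) * b j))) i j =
      L (p * ((∑ i, c i • (b i : MvPolynomial (Fin n) ℝ)) *
        (∑ i, c i • (b i : MvPolynomial (Fin n) ℝ)))) := by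
    intro c
    rw [Finset.sum_mul_sum]
    simp only [Finset.mul_sum, map_sum, Matrix.of_apply]
    refine Finset.sum_congr rfl fun i _ => Finset.sum_congr rfl fun j _ => ?_
    rw [← smul_eq_mul (c i * c j), ← map_smul]
    congr 1
    simp only [MvPolynomial.smul_eq_C_mul, C_mul]
    ring
  simp only [key]
  constructor
  · intro h c
    exact h _ (Submodule.sum_mem _ fun i _ => Submodule.smul_mem _ _ (b i).2)
  · intro h q hq
    have h5 : ∑ j, b.repr ⟨q, hq⟩ j • (b j : MvPolynomial (Fin n) ℝ) = q := by
      have := congrArg Q.subtype (b.sum_repr ⟨q, hq⟩)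
      rw [map_sum] at this
      exact this
    have := h fun j => b.repr ⟨q, hq⟩ j
    rwa [h5] at this

/-- The line `v + s (X - v)`. -/
def zl {n : ℕ} (v : Fin n → ℝ) (s : ℝ) : Fin n → MvPolynomial (Fin n) ℝ :=
  fun i => C (v i) + C s * (X i - C (v i))

theorem aeval_zl_zero {n : ℕ} (v : Fin n → ℝ) (g : MvPolynomial (Fin n) ℝ) :
    aeval (zl v 0) g = C (eval v g) := by
  have h : zl v 0 = fun i => algebraMap ℝ (MvPolynomial (Fin n) ℝ) (v i) := by
    ext1 i; simp [zl, MvPolynomial.algebraMap_eq]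
  rw [h]
  have := MvPolynomial.aeval_algebraMap_apply (MvPolynomial (Fin n) ℝ) v g
  exact this

theorem aeval_zl_one {n : ℕ} (v : Fin n → ℝ) (g : MvPolynomial (Fin n) ℝ) :
    aeval (zl v 1) g = g := by
  have h : zl v 1 = X := by
    ext1 i; simp [zl]
  rw [h]
  simp

theorem hasDerivAt_zl {n : ℕ} (v : Fin n → ℝ) (g : MvPolynomial (Fin n) ℝ) :
    ∀ (L : MvPolynomial (Fin n) ℝ →ₗ[ℝ] ℝ) (s : ℝ),
    HasDerivAt (fun s => L (aeval (zl v s) g))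
      (∑ i, L ((X i - C (v i)) * aeval (zl v s) (pderiv i g))) s := by
  induction g using MvPolynomial.induction_on with
  | C a =>
    intro L s
    simpa using hasDerivAt_const s _
  | add p q hp hq =>
    intro L s
    have := (hp L s).add (hq L s)
    simp only [map_add, mul_add, Finset.sum_add_distrib]
    exact this
  | mul_X p k hp =>
    intro L s
    have h1 := (hp L s).const_mul (v k)
    have h2 := (hasDerivAt_id' s).fun_mul (hp (L.comp (LinearMap.mulLeft ℝ (X k - C (v k)))) s)
    have h3 := h1.fun_add h2
    have key : ∀ (A : MvPolynomial (Fin n) ℝ) (s : ℝ), L (A * zl v s k) =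
        v k * L A + s * L ((X k - C (v k)) * A) := by
      intro A s
      rw [← smul_eq_mul (v k), ← smul_eq_mul s, ← map_smul, ← map_smul, ← map_add]
      congr 1
      simp only [MvPolynomial.smul_eq_C_mul, zl]
      ring
    have hfun : (fun s => L (aeval (zl v s) (p * X k))) = fun s =>
        v k * L (aeval (zl v s) p) +
        s * (L.comp (LinearMap.mulLeft ℝ (X k - C (v k)))) (aeval (zl v s) p) := by
      ext s
      rw [map_mul, aeval_X, key]
      rfl
    rw [hfun]
    refine h3.congr_deriv ?_
    · simp only [LinearMap.comp_apply, LinearMap.mulLeft_apply]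
      have hterm : ∀ i, L ((X i - C (v i)) * aeval (zl v s) (pderiv i (p * X k))) =
          (v k * L ((X i - C (v i)) * aeval (zl v s) (pderiv i p)) +
          s * L ((X k - C (v k)) * ((X i - C (v i)) * aeval (zl v s) (pderiv i p)))) +
          (if i = k then L ((X i - C (v i)) * aeval (zl v s) p) else 0) := by
        intro i
        rw [← key]
        split_ifs with hik
        · subst hik
          rw [← map_add]
          congr 1
          simp only [Derivation.leibniz, pderiv_X_self, smul_eq_mul, map_add, map_mul, aeval_X,
            map_one]
          ring
        · rw [add_zero]
          congr 1
          simp only [Derivation.leibniz, pderiv_X_of_ne (Ne.symm hik), smul_eq_mul, map_add, map_mul,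
            aeval_X, map_zero]
          ring
      simp only [hterm, Finset.sum_add_distrib, Finset.mul_sum, Finset.sum_ite_eq',
        Finset.mem_univ, if_true]
      ring

theorem jensen {n : ℕ} (g : MvPolynomial (Fin n) ℝ) (L : MvPolynomial (Fin n) ℝ →ₗ[ℝ] ℝ)
    (v : Fin n → ℝ) (h1 : L 1 = 1) (hX : ∀ i, L (X i) = v i)
    (hess : ∀ s ∈ Set.Icc (0 : ℝ) 1, ∑ i, ∑ j, L ((X i - C (v i)) * (X j - C (v j)) *
      aeval (zl v s) (pderiv i (pderiv j g))) ≤ 0) :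
    L g ≤ eval v g := by
  have hC : ∀ a : ℝ, L (C a) = a := fun a => by
    have : (C a : MvPolynomial (Fin n) ℝ) = a • 1 := by simp [MvPolynomial.smul_eq_C_mul]
    rw [this, map_smul, h1]; simp
  let φ' : ℝ → ℝ := fun s => ∑ j, L ((X j - C (v j)) * aeval (zl v s) (pderiv j g))
  have hφ : ∀ s, HasDerivAt (fun s => L (aeval (zl v s) g)) (φ' s) s :=
    fun s => hasDerivAt_zl v g L s
  have hφ' : ∀ s, HasDerivAt φ' (∑ j, ∑ i, L ((X j - C (v j)) * ((X i - C (v i)) *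
      aeval (zl v s) (pderiv i (pderiv j g))))) s := by
    intro s
    refine HasDerivAt.fun_sum fun j _ => ?_
    exact hasDerivAt_zl v (pderiv j g) (L.comp (LinearMap.mulLeft ℝ (X j - C (v j)))) s
  have hanti : AntitoneOn φ' (Set.Icc 0 1) := by
    refine antitoneOn_of_deriv_nonpos (convex_Icc 0 1)
      (fun s _ => (hφ' s).continuousAt.continuousWithinAt)
      (fun s _ => (hφ' s).differentiableAt.differentiableWithinAt) fun s hs => ?_
    rw [(hφ' s).deriv, Finset.sum_comm]
    refine le_trans (le_of_eq ?_) (hess s (interior_subset hs))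
    refine Finset.sum_congr rfl fun i _ => Finset.sum_congr rfl fun j _ => ?_
    congr 1; ring
  have h0 : φ' 0 = 0 := by
    refine Finset.sum_eq_zero fun j _ => ?_
    rw [aeval_zl_zero, mul_comm, ← MvPolynomial.smul_eq_C_mul, map_smul, map_sub, hX, hC]
    simp
  have hanti2 : AntitoneOn (fun s => L (aeval (zl v s) g)) (Set.Icc 0 1) := by
    refine antitoneOn_of_deriv_nonpos (convex_Icc 0 1)
      (fun s _ => (hφ s).continuousAt.continuousWithinAt)
      (fun s _ => (hφ s).differentiableAt.differentiableWithinAt) fun s hs => ?_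
    rw [(hφ s).deriv, ← h0]
    have hs' := interior_subset hs
    exact hanti (by simp) hs' hs'.1
  have := hanti2 (a := 0) (by simp) (b := 1) (by simp) zero_le_one
  simpa only [aeval_zl_zero, aeval_zl_one, hC] using this

/-- evaluation as a linear functional -/
def evL {n : ℕ} (x : Rn n) : MvPolynomial (Fin n) ℝ →ₗ[ℝ] ℝ :=
  (MvPolynomial.aeval (fun i => x i) : MvPolynomial (Fin n) ℝ →ₐ[ℝ] ℝ).toLinearMap

theorem evL_apply {n : ℕ} (x : Rn n) (p : MvPolynomial (Fin n) ℝ) : evL x p = peval p x := by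
  simp [evL, peval, aeval_eq_eval]

/-- Exactness of a moment relaxation. -/
theorem SDPc.moment {n : ℕ} (g : MvPolynomial (Fin n) ℝ) (B : Set (Rn n))
    (K : Set (MvPolynomial (Fin n) ℝ →ₗ[ℝ] ℝ)) (hK : SpecCone K)
    (hev : ∀ x ∈ B, evL x ∈ K)
    (hB : ∀ L ∈ K, ∀ v : Rn n, L 1 = 1 → (∀ i, L (X i) = v i) → v ∈ B)
    (hess : ∀ L ∈ K, ∀ v : Rn n, L 1 = 1 → (∀ i, L (X i) = v i) → ∀ s ∈ Set.Icc (0 : ℝ) 1,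
      ∑ i, ∑ j, L ((X i - C (v i)) * (X j - C (v j)) *
      aeval (zl (fun i => v i) s) (pderiv i (pderiv j g))) ≤ 0) :
    SDPc (B ∩ {x | 0 ≤ peval g x}) := by
  let pr : (MvPolynomial (Fin n) ℝ →ₗ[ℝ] ℝ) →ₗ[ℝ] Rn n :=
    (WithLp.linearEquiv 2 ℝ (Fin n → ℝ)).symm.toLinearMap.comp
      (LinearMap.pi fun i => LinearMap.applyₗ (X i))
  have hpr : ∀ L i, pr L i = L (X i) := fun L i => rfl
  refine ⟨MvPolynomial (Fin n) ℝ →ₗ[ℝ] ℝ, inferInstance, inferInstance, K ∩ {L | 0 ≤ L g},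
    LinearMap.applyₗ 1, pr, hK.inter (SpecCone.nonneg (LinearMap.applyₗ g)), ?_⟩
  ext x
  constructor
  · rintro ⟨hx, hg⟩
    refine ⟨evL x, ⟨hev x hx, ?_⟩, ?_, ?_⟩
    · rw [Set.mem_ofPred_eq, evL_apply]; exact hg
    · simp [evL]
    · ext i; rw [hpr]; simp [evL]
  · rintro ⟨L, ⟨hL, hLg⟩, h1, rfl⟩
    have h1' : L 1 = 1 := h1
    refine ⟨hB L hL _ h1' fun i => rfl, ?_⟩
    have := jensen g L (fun i => pr L i) h1' (fun i => rfl) (hess L hL _ h1' fun i => rfl)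
    exact le_trans hLg this

theorem exists_fg_zl {n : ℕ} (p : MvPolynomial (Fin n) ℝ) :
    ∃ Q : Submodule ℝ (MvPolynomial (Fin n) ℝ), Q.FG ∧ ∀ v s, aeval (zl v s) p ∈ Q := by
  induction p using MvPolynomial.induction_on with
  | C a =>
    refine ⟨Submodule.span ℝ {1}, Submodule.fg_span (by simp), fun v s => ?_⟩
    rw [Submodule.mem_span_singleton]
    exact ⟨a, by simp [MvPolynomial.smul_eq_C_mul, MvPolynomial.algebraMap_eq]⟩
  | add p q hp hq =>
    obtain ⟨P, hP, hP'⟩ := hp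
    obtain ⟨Q, hQ, hQ'⟩ := hq
    refine ⟨P ⊔ Q, hP.sup hQ, fun v s => ?_⟩
    rw [map_add]
    exact Submodule.add_mem_sup (hP' v s) (hQ' v s)
  | mul_X p k hp =>
    obtain ⟨P, hP, hP'⟩ := hp
    refine ⟨P * Submodule.span ℝ {1, X k}, hP.mul (Submodule.fg_span (by simp)), fun v s => ?_⟩
    rw [map_mul, aeval_X]
    refine Submodule.mul_mem_mul (hP' v s) ?_
    have : zl v s k = (v k - s * v k) • (1 : MvPolynomial (Fin n) ℝ) + s • X k := by
      simp only [zl, MvPolynomial.smul_eq_C_mul, C_sub, C_mul]; ring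
    rw [this]
    exact Submodule.add_mem _ (Submodule.smul_mem _ _ (Submodule.subset_span (by simp)))
      (Submodule.smul_mem _ _ (Submodule.subset_span (by simp)))

/-- linear forms -/
def Q1 (n : ℕ) : Submodule ℝ (MvPolynomial (Fin n) ℝ) :=
  Submodule.span ℝ (insert 1 (Set.range X))

theorem Q1_fg (n : ℕ) : (Q1 n).FG :=
  Submodule.fg_span ((Set.finite_range _).insert _)

theorem one_mem_Q1 (n : ℕ) : 1 ∈ Q1 n := Submodule.subset_span (by simp)

theorem sub_mem_Q1 {n : ℕ} (i : Fin n) (c : ℝ) : X i - C c ∈ Q1 n := by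
  refine Submodule.sub_mem _ (Submodule.subset_span (by simp)) ?_
  have : (C c : MvPolynomial (Fin n) ℝ) = c • 1 := by simp [MvPolynomial.smul_eq_C_mul]
  rw [this]
  exact Submodule.smul_mem _ _ (one_mem_Q1 n)

theorem SDPc.sosConcave {n : ℕ} (g : MvPolynomial (Fin n) ℝ) (hg : SosConcave g) :
    SDPc {x : Rn n | 0 ≤ peval g x} := by
  obtain ⟨k, W, hW⟩ := hg
  choose Q hQ hQ' using fun l i => exists_fg_zl (W l i)
  let R : Submodule ℝ (MvPolynomial (Fin n) ℝ) := (⨆ l, ⨆ i, Q l i) * Q1 n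
  have hR : R.FG := (Submodule.fg_iSup _ fun l => Submodule.fg_iSup _ fun i => hQ l i).mul (Q1_fg n)
  have := SDPc.moment g Set.univ _ (momentCone R hR 1) (fun x _ q _ => ?_) (by simp) ?_
  · simpa using this
  · rw [evL_apply]
    simp only [peval, one_mul, map_mul]
    exact mul_self_nonneg _
  · intro L hL v h1 hX s hs
    have h2 : ∑ i, ∑ j, L ((X i - C (v i)) * (X j - C (v j)) *
        aeval (zl (fun i => v i) s) (pderiv i (pderiv j g))) =
        - ∑ l, L (1 * ((∑ i, aeval (zl (fun i => v i) s) (W l i) * (X i - C (v i))) *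
          (∑ i, aeval (zl (fun i => v i) s) (W l i) * (X i - C (v i))))) := by
      simp only [← map_sum, ← map_neg]
      congr 1
      simp only [one_mul, Finset.sum_mul_sum]
      rw [Finset.sum_comm, ← Finset.sum_neg_distrib]
      have hW' : ∀ i j, pderiv i (pderiv j g) = - ∑ l, W l i * W l j := fun i j => by
        rw [← hW]; simp
      simp only [hW', map_neg, map_sum, map_mul, mul_neg, Finset.mul_sum, Finset.sum_neg_distrib,
        neg_inj]
      rw [Finset.sum_comm]
      conv_rhs => rw [Finset.sum_comm]
      refine Finset.sum_congr rfl fun i _ => ?_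
      rw [Finset.sum_comm]
      refine Finset.sum_congr rfl fun j _ => Finset.sum_congr rfl fun l _ => ?_
      ring
    rw [h2, neg_nonpos]
    refine Finset.sum_nonneg fun l _ => hL _ ?_
    refine Submodule.sum_mem _ fun i _ => Submodule.mul_mem_mul ?_ (sub_mem_Q1 _ _)
    exact Submodule.mem_iSup_of_mem l (Submodule.mem_iSup_of_mem i (hQ' l i _ _))

/-! ### Strictly concave polynomials near a point -/

theorem pderiv_swap {n : ℕ} (i j : Fin n) (p : MvPolynomial (Fin n) ℝ) :
    pderiv i (pderiv j p) = pderiv j (pderiv i p) := by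
  induction p using MvPolynomial.induction_on with
  | C a => simp
  | add p q hp hq => simp [hp, hq]
  | mul_X p k hp =>
    simp only [Derivation.leibniz, smul_eq_mul, map_add, hp, pderiv_X]
    simp only [Pi.single_apply, apply_ite (pderiv i), apply_ite (pderiv j), map_one, map_zero,
      pderiv_one]
    split_ifs <;> ring

theorem hadamard_nonneg {n : ℕ} (A B : Matrix (Fin n) (Fin n) ℝ) (hA : A.IsSymm) (hB : B.IsSymm)
    (hA' : ∀ c : Fin n → ℝ, 0 ≤ ∑ i, ∑ j, c i * c j * A i j)
    (hB' : ∀ c : Fin n → ℝ, 0 ≤ ∑ i, ∑ j, c i * c j * B i j) :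
    0 ≤ ∑ i, ∑ j, A i j * B i j := by
  have h := ((posSemidef_iff_real hA).2 hA').hadamard ((posSemidef_iff_real hB).2 hB')
  have hs : (Matrix.hadamard A B).IsSymm := by
    ext i j
    simp [hA.apply i j, hB.apply i j]
  have := (posSemidef_iff_real hs).1 h 1
  simpa using this

/-- The closed box. -/
def Box {n : ℕ} (u : Rn n) (δ : ℝ) : Set (Rn n) := {x | ∀ i, |x i - u i| ≤ δ}

/-- Product of shifted variables along a list. -/
def ym {n : ℕ} (u : Rn n) (l : List (Fin n)) : MvPolynomial (Fin n) ℝ :=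
  (l.map fun i => X i - C (u i)).prod

theorem L_C_mul {n : ℕ} (L : MvPolynomial (Fin n) ℝ →ₗ[ℝ] ℝ) (a : ℝ)
    (p : MvPolynomial (Fin n) ℝ) : L (C a * p) = a * L p := by
  rw [← MvPolynomial.smul_eq_C_mul, map_smul, smul_eq_mul]

theorem list_bound {n : ℕ} (u v : Rn n) (δ : ℝ) (D : ℕ)
    (L : MvPolynomial (Fin n) ℝ →ₗ[ℝ] ℝ)
    (hL : ∀ l : List (Fin n), l.length ≤ D → ∀ q ∈ Q1 n,
      |L (ym u l * (q * q))| ≤ δ ^ l.length * L (q * q))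
    (hv : v ∈ Box u δ) (s : ℝ) (hs : s ∈ Set.Icc (0 : ℝ) 1)
    (q : MvPolynomial (Fin n) ℝ) (hq : q ∈ Q1 n) (l₁ : List (Fin n)) :
    ∀ l₂ : List (Fin n), l₁.length + l₂.length ≤ D →
      |L ((l₁.map fun i => zl (fun i => v i) s i - C (u i)).prod * ym u l₂ * (q * q))| ≤
        δ ^ (l₁.length + l₂.length) * L (q * q) := by
  induction l₁ with
  | nil =>
    intro l₂ hl
    simpa using hL l₂ (by simpa using hl) q hq
  | cons i l₁ ih =>
    intro l₂ hl
    simp only [List.length_cons] at hl ⊢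
    have h1 := ih l₂ (by omega)
    have h2 := ih (i :: l₂) (by simp; omega)
    have h3 : (((i :: l₁).map fun i => zl (fun i => v i) s i - C (u i)).prod * ym u l₂ * (q * q)) =
        C ((1 - s) * (v i - u i)) *
          ((l₁.map fun i => zl (fun i => v i) s i - C (u i)).prod * ym u l₂ * (q * q)) +
        C s * ((l₁.map fun i => zl (fun i => v i) s i - C (u i)).prod * ym u (i :: l₂) *
          (q * q)) := by
      simp only [List.map_cons, List.prod_cons, ym, zl, C_mul, C_sub, C_1]
      ring
    rw [h3, map_add, L_C_mul, L_C_mul]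
    set a := L ((l₁.map fun i => zl (fun i => v i) s i - C (u i)).prod * ym u l₂ * (q * q))
    set b := L ((l₁.map fun i => zl (fun i => v i) s i - C (u i)).prod * ym u (i :: l₂) * (q * q))
    rw [List.length_cons] at h2
    have hvi := hv i
    have e1 : |(1 - s) * (v i - u i) * a| ≤ (1 - s) * (δ * (δ ^ (l₁.length + l₂.length) *
        L (q * q))) := by
      rw [mul_assoc, abs_mul, abs_mul, abs_of_nonneg (sub_nonneg.2 hs.2)]
      refine mul_le_mul_of_nonneg_left ?_ (sub_nonneg.2 hs.2)
      exact mul_le_mul hvi h1 (abs_nonneg _) ((abs_nonneg _).trans hvi)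
    have e2 : |s * b| ≤ s * (δ ^ (l₁.length + (l₂.length + 1)) * L (q * q)) := by
      rw [abs_mul, abs_of_nonneg hs.1]
      exact mul_le_mul_of_nonneg_left h2 hs.1
    refine (abs_add_le _ _).trans ((add_le_add e1 e2).trans (le_of_eq ?_))
    ring

theorem poly_bound {n : ℕ} (u : Rn n) (P : MvPolynomial (Fin n) ℝ)
    (hP : eval (fun i => u i) P = 0) :
    ∃ (D₀ : ℕ) (M : ℝ), 0 ≤ M ∧ ∀ (D : ℕ) (_ : D₀ ≤ D) (δ : ℝ) (_ : 0 < δ) (_ : δ ≤ 1)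
      (L : MvPolynomial (Fin n) ℝ →ₗ[ℝ] ℝ)
      (_ : ∀ l : List (Fin n), l.length ≤ D → ∀ q ∈ Q1 n,
        |L (ym u l * (q * q))| ≤ δ ^ l.length * L (q * q))
      (v : Rn n) (_ : v ∈ Box u δ) (s : ℝ) (_ : s ∈ Set.Icc (0 : ℝ) 1),
      ∀ q ∈ Q1 n, |L (aeval (zl (fun i => v i) s) P * (q * q))| ≤ δ * M * L (q * q) := by
  let P' : MvPolynomial (Fin n) ℝ := aeval (fun i => X i + C (u i)) P
  have hP' : coeff 0 P' = 0 := by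
    have h1 : coeff 0 P' = aeval (fun _ => (0 : ℝ)) P' := by
      rw [aeval_eq_eval]
      change constantCoeff P' = _
      rw [← MvPolynomial.eval_zero']
    rw [h1]
    simp only [P', MvPolynomial.comp_aeval_apply]
    refine Eq.trans ?_ hP
    simp [aeval_eq_eval]
  refine ⟨P'.support.sup fun m => (Finsupp.toMultiset m).toList.length,
    ∑ m ∈ P'.support, |coeff m P'|, Finset.sum_nonneg fun _ _ => abs_nonneg _, ?_⟩
  intro D hD δ hδ hδ1 L hL v hv s hs q hq
  have h1 : aeval (zl (fun i => v i) s) P =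
      aeval (fun i => zl (fun i => v i) s i - C (u i)) P' := by
    simp only [P', MvPolynomial.comp_aeval_apply]
    congr 2
    ext1 i
    rw [map_add, aeval_X, ← MvPolynomial.algebraMap_eq, AlgHom.commutes]
    simp
  have h2 : aeval (fun i => zl (fun i => v i) s i - C (u i)) P' = ∑ m ∈ P'.support,
      C (coeff m P') * ((Finsupp.toMultiset m).toList.map
        fun i => zl (fun i => v i) s i - C (u i)).prod := by
    rw [aeval_def, eval₂_eq]
    refine Finset.sum_congr rfl fun m _ => ?_
    rw [MvPolynomial.algebraMap_eq]
    congr 1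
    rw [← Multiset.prod_coe, ← Multiset.map_coe, Multiset.coe_toList, Finsupp.toMultiset_map,
      Finsupp.prod_toMultiset, Finsupp.prod_mapDomain_index (by simp) (by intros; rw [pow_add])]
    rfl
  have hqq : 0 ≤ L (q * q) := by
    have := hL [] (by simp) q hq
    simp [ym] at this
    exact (abs_nonneg _).trans this
  rw [h1, h2, Finset.sum_mul, map_sum]
  refine (Finset.abs_sum_le_sum_abs _ _).trans ?_
  rw [Finset.mul_sum, Finset.sum_mul]
  refine Finset.sum_le_sum fun m hm => ?_
  rw [mul_assoc, L_C_mul, abs_mul]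
  have hlen : (Finsupp.toMultiset m).toList.length ≤ D :=
    (Finset.le_sup (f := fun m => (Finsupp.toMultiset m).toList.length) hm).trans hD
  have h3 := list_bound u v δ D L hL hv s hs q hq (Finsupp.toMultiset m).toList [] (by simpa using hlen)
  simp only [ym, List.map_nil, List.prod_nil, mul_one, List.length_nil, add_zero] at h3
  have hm0 : (Finsupp.toMultiset m).toList.length ≠ 0 := by
    intro h0
    rw [Multiset.length_toList, Multiset.card_eq_zero] at h0
    have : m = 0 := by
      classical
      simpa only [Finsupp.toMultiset_toFinsupp, map_zero] using congrArg Multiset.toFinsupp h0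
    rw [this, MvPolynomial.mem_support_iff] at hm
    exact hm hP'
  have h4 : δ ^ (Finsupp.toMultiset m).toList.length ≤ δ := pow_le_of_le_one hδ.le hδ1 hm0
  calc |coeff m P'| * _ ≤ |coeff m P'| * (δ * L (q * q)) :=
        mul_le_mul_of_nonneg_left (h3.trans (mul_le_mul_of_nonneg_right h4 hqq)) (abs_nonneg _)
    _ = _ := by ring

theorem SDPc.strictConcave {n : ℕ} (g : MvPolynomial (Fin n) ℝ) (u : Rn n) (c : ℝ) (hc : 0 < c)
    (hess : ∀ w : Fin n → ℝ, ∑ i, ∑ j, w i * w j *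
      eval (fun k => u k) (pderiv i (pderiv j g)) ≤ - c * ∑ i, w i * w i) :
    ∃ δ₀ > 0, ∀ δ > 0, δ ≤ δ₀ → SDPc (Box u δ ∩ {x | 0 ≤ peval g x}) := by
  let h : Fin n → Fin n → ℝ := fun i j => eval (fun k => u k) (pderiv i (pderiv j g))
  choose D₀ M hM hb using fun i j => poly_bound u (pderiv i (pderiv j g) - C (h i j)) (by simp [h])
  let MM := ∑ i, ∑ j, M i j
  have hMM : ∀ i j, M i j ≤ MM := fun i j =>
    (Finset.single_le_sum (fun j _ => hM i j) (Finset.mem_univ j)).trans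
      (Finset.single_le_sum (f := fun i => ∑ j, M i j)
        (fun i _ => Finset.sum_nonneg fun j _ => hM i j) (Finset.mem_univ i))
  have hMM0 : 0 ≤ MM := Finset.sum_nonneg fun i _ => Finset.sum_nonneg fun j _ => hM i j
  let D := 1 + ∑ i, ∑ j, D₀ i j
  have hD : ∀ i j, D₀ i j ≤ D := fun i j =>
    ((Finset.single_le_sum (f := fun j => D₀ i j) (fun j _ => Nat.zero_le _)
      (Finset.mem_univ j)).trans
      (Finset.single_le_sum (f := fun i => ∑ j, D₀ i j)
        (fun i _ => Nat.zero_le _) (Finset.mem_univ i))).trans (Nat.le_add_left _ _)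
  refine ⟨min 1 (c / (MM * n + 1)), by positivity, fun δ hδ hδ₀ => ?_⟩
  have hδ1 : δ ≤ 1 := hδ₀.trans (min_le_left _ _)
  have hδ2 : δ * MM * n ≤ c := by
    have h1 : δ ≤ c / (MM * n + 1) := hδ₀.trans (min_le_right _ _)
    rw [le_div_iff₀ (by positivity)] at h1
    nlinarith
  have hfin : Finite {l : List (Fin n) // l.length ≤ D} := (List.finite_length_le (Fin n) D)
  have hcone := SpecCone.forall (fun l : {l : List (Fin n) // l.length ≤ D} =>
    {L : MvPolynomial (Fin n) ℝ →ₗ[ℝ] ℝ | ∀ q ∈ Q1 n,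
      0 ≤ L ((C (δ ^ l.1.length) - ym u l.1) * (q * q))} ∩
    {L : MvPolynomial (Fin n) ℝ →ₗ[ℝ] ℝ | ∀ q ∈ Q1 n,
      0 ≤ L ((C (δ ^ l.1.length) + ym u l.1) * (q * q))})
    fun l => (momentCone _ (Q1_fg n) _).inter (momentCone _ (Q1_fg n) _)
  refine SDPc.moment g (Box u δ) _ hcone ?_ ?_ ?_
  · intro x hx l
    have h1 : |peval (ym u l.1) x| ≤ δ ^ l.1.length := by
      generalize l.1 = l'
      induction l' with
      | nil => simp [ym, peval]
      | cons i l' ih =>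
        have : peval (ym u (i :: l')) x = (x i - u i) * peval (ym u l') x := by
          simp [ym, peval]
        rw [this, abs_mul, List.length_cons, pow_succ']
        exact mul_le_mul (hx i) ih (abs_nonneg _) hδ.le
    rw [abs_le] at h1
    constructor
    · intro q _
      rw [evL_apply]
      simp only [peval, map_mul, map_sub, eval_C] at *
      exact mul_nonneg (by linarith) (mul_self_nonneg _)
    · intro q _
      rw [evL_apply]
      simp only [peval, map_mul, map_add, eval_C] at *
      exact mul_nonneg (by linarith) (mul_self_nonneg _)
  all_goals
    intro L hL v h1 hX
    have hL' : ∀ l : List (Fin n), l.length ≤ D → ∀ q ∈ Q1 n,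
        |L (ym u l * (q * q))| ≤ δ ^ l.length * L (q * q) := by
      intro l hl q hq
      have e1 := (hL ⟨l, hl⟩).1 q hq
      have e2 := (hL ⟨l, hl⟩).2 q hq
      simp only [sub_mul, add_mul, map_sub, map_add, L_C_mul] at e1 e2
      rw [abs_le]
      constructor <;> linarith
    have hC : ∀ a : ℝ, L (C a) = a := fun a => by
      have := L_C_mul L a 1
      rwa [mul_one, h1, mul_one] at this
    have hvB : v ∈ Box u δ := by
      intro i
      have := hL' [i] (by simp [D]) 1 (one_mem_Q1 n)
      simpa [ym, h1, hX, hC] using this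
  · exact hvB
  · intro s hs
    let w : Fin n → MvPolynomial (Fin n) ℝ := fun i => X i - C (v i)
    have hw : ∀ i, w i ∈ Q1 n := fun i => sub_mem_Q1 _ _
    let A : Fin n → ℝ := fun i => L (w i * w i)
    have hqq : ∀ q ∈ Q1 n, 0 ≤ L (q * q) := by
      intro q hq
      have := hL' [] (by simp) q hq
      simp [ym] at this
      exact (abs_nonneg _).trans this
    have hA : ∀ i, 0 ≤ A i := fun i => hqq _ (hw i)
    have split : ∀ i j, L ((X i - C (v i)) * (X j - C (v j)) *
        aeval (zl (fun i => v i) s) (pderiv i (pderiv j g))) = h i j * L (w i * w j) +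
        L (aeval (zl (fun i => v i) s) (pderiv i (pderiv j g) - C (h i j)) * (w i * w j)) := by
      intro i j
      rw [← L_C_mul, ← map_add]
      congr 1
      rw [map_sub, ← MvPolynomial.algebraMap_eq, AlgHom.commutes]
      simp only [w, MvPolynomial.algebraMap_eq]
      ring
    have second : ∀ i j, L (aeval (zl (fun i => v i) s) (pderiv i (pderiv j g) - C (h i j)) *
        (w i * w j)) ≤ δ * MM * ((A i + A j) / 2) := by
      intro i j
      set p := aeval (zl (fun i => v i) s) (pderiv i (pderiv j g) - C (h i j)) with hp
      have b1 := hb i j D (hD i j) δ hδ hδ1 L hL' v hvB s hs (w i + w j)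
        (Submodule.add_mem _ (hw i) (hw j))
      have b2 := hb i j D (hD i j) δ hδ hδ1 L hL' v hvB s hs (w i - w j)
        (Submodule.sub_mem _ (hw i) (hw j))
      rw [← hp] at b1 b2
      have e1 : L (p * ((w i + w j) * (w i + w j))) = L (p * (w i * w i)) +
          2 * L (p * (w i * w j)) + L (p * (w j * w j)) := by
        rw [← L_C_mul, ← map_add, ← map_add]
        congr 1
        simp only [map_ofNat]
        ring
      have e2 : L (p * ((w i - w j) * (w i - w j))) = L (p * (w i * w i)) -
          2 * L (p * (w i * w j)) + L (p * (w j * w j)) := by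
        rw [← L_C_mul, ← map_sub, ← map_add]
        congr 1
        simp only [map_ofNat]
        ring
      have e3 : L ((w i + w j) * (w i + w j)) + L ((w i - w j) * (w i - w j)) =
          2 * (A i + A j) := by
        simp only [A]
        rw [← map_add, ← map_add, ← L_C_mul]
        congr 1
        simp only [map_ofNat]
        ring
      rw [abs_le] at b1 b2
      have e4 : L (p * (w i * w j)) ≤ δ * M i j * ((A i + A j) / 2) := by
        have : δ * M i j * L ((w i + w j) * (w i + w j)) +
          δ * M i j * L ((w i - w j) * (w i - w j)) = δ * M i j * (2 * (A i + A j)) := by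
          rw [← e3]; ring
        linarith [b1.2, b2.1]
      refine e4.trans ?_
      have := hA i
      have := hA j
      gcongr
      exact hMM i j
    have first : ∑ i, ∑ j, h i j * L (w i * w j) ≤ - c * ∑ i, A i := by
      have := hadamard_nonneg (Matrix.of fun i j => - h i j - if i = j then c else 0)
        (Matrix.of fun i j => L (w i * w j))
        (by ext i j; simp [h, pderiv_swap i j, eq_comm]) (by ext i j; simp [mul_comm])
        (fun d => by
          have := hess d
          simp only [Matrix.of_apply, mul_sub, Finset.sum_sub_distrib, mul_neg,
            Finset.sum_neg_distrib, mul_ite, mul_zero, Finset.sum_ite_eq, Finset.mem_univ,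
            if_true, ← Finset.sum_mul]
          simp only [h]
          linarith)
        (fun d => by
          have := hqq (∑ i, d i • w i)
            (Submodule.sum_mem _ fun i _ => Submodule.smul_mem _ _ (hw i))
          refine this.trans_eq ?_
          rw [Finset.sum_mul_sum]
          simp only [map_sum, Matrix.of_apply]
          refine Finset.sum_congr rfl fun i _ => Finset.sum_congr rfl fun j _ => ?_
          rw [← L_C_mul]
          congr 1
          simp only [MvPolynomial.smul_eq_C_mul, C_mul]
          ring)
      simp only [Matrix.of_apply, sub_mul, Finset.sum_sub_distrib, neg_mul,
            Finset.sum_neg_distrib, ite_mul, zero_mul, Finset.sum_ite_eq, Finset.mem_univ,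
            if_true, ← Finset.mul_sum] at this
      simp only [A]
      linarith
    have hsum : ∑ i, ∑ j, δ * MM * ((A i + A j) / 2) = δ * MM * n * ∑ i, A i := by
      simp only [← Finset.mul_sum, ← Finset.sum_div, Finset.sum_add_distrib, Finset.sum_const,
        Finset.card_univ, Fintype.card_fin, nsmul_eq_mul]
      ring
    simp only [split, Finset.sum_add_distrib]
    have h2 : ∑ i, ∑ j, L (aeval (zl (fun i => v i) s) (pderiv i (pderiv j g) - C (h i j)) *
        (w i * w j)) ≤ δ * MM * n * ∑ i, A i := by
      rw [← hsum]
      exact Finset.sum_le_sum fun i _ => Finset.sum_le_sum fun j _ => second i j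
    have hAs : 0 ≤ ∑ i, A i := Finset.sum_nonneg fun i _ => hA i
    nlinarith
theorem finsler {n : ℕ} (a : Fin n → ℝ) (H : Fin n → Fin n → ℝ)
    (h : ∀ v : Fin n → ℝ, v ≠ 0 → ∑ i, a i * v i = 0 → ∑ i, ∑ j, v i * v j * H i j < 0) :
    ∃ M : ℝ, 0 ≤ M ∧ ∃ c > 0, ∀ w : Fin n → ℝ,
      ∑ i, ∑ j, w i * w j * H i j - 2 * M * (∑ i, a i * w i) ^ 2 ≤ - c * ∑ i, w i * w i := by
  let F : ℕ → Rn n → ℝ := fun m w =>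
    ∑ i, ∑ j, w i * w j * H i j - 2 * m * (∑ i, a i * w i) ^ 2
  have hF : ∀ m, Continuous (F m) := fun m => by
    unfold F
    fun_prop
  have hK : IsCompact (sphere (0 : Rn n) 1) := isCompact_sphere _ _
  have hmono : Monotone fun m : ℕ => {w : Rn n | F m w < 0} := by
    intro m m' hmm w hw
    have h1 : (m : ℝ) ≤ m' := by exact_mod_cast hmm
    have h2 := mul_le_mul_of_nonneg_right h1 (sq_nonneg (∑ i, a i * w i))
    have hw' : F m w < 0 := hw
    change F m' w < 0
    unfold F at hw' ⊢
    linarith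
  obtain ⟨m, hm⟩ := hK.elim_directed_cover (fun m : ℕ => {w : Rn n | F m w < 0})
    (fun m => isOpen_lt (hF m) continuous_const) (by
      intro w hw
      simp only [Set.mem_iUnion]
      by_cases hl : ∑ i, a i * w i = 0
      · refine ⟨0, ?_⟩
        change F 0 w < 0
        unfold F
        rw [hl]
        have := h (fun i => w i) (by
          intro h0
          have : w = 0 := by
            ext i
            exact congrFun h0 i
          rw [this] at hw
          simp at hw) hl
        simpa using this
      · have hp : 0 < (∑ i, a i * w i) ^ 2 := by positivity
        obtain ⟨m, hm⟩ := exists_nat_gt ((∑ i, ∑ j, w i * w j * H i j) / (∑ i, a i * w i) ^ 2)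
        refine ⟨m, ?_⟩
        change F m w < 0
        unfold F
        rw [div_lt_iff₀ hp] at hm
        have : 0 ≤ (m : ℝ) * (∑ i, a i * w i) ^ 2 := by positivity
        linarith)
    hmono.directed_le
  obtain ⟨c, hc, hcF⟩ : ∃ c > 0, ∀ w ∈ sphere (0 : Rn n) 1, F m w ≤ -c := by
    rcases (sphere (0 : Rn n) 1).eq_empty_or_nonempty with he | hne
    · exact ⟨1, one_pos, by simp [he]⟩
    · obtain ⟨w0, hw0, hmax⟩ := hK.exists_isMaxOn hne (hF m).continuousOn
      refine ⟨-F m w0, ?_, fun w hw => ?_⟩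
      · have : F m w0 < 0 := hm hw0
        linarith
      · have : F m w ≤ F m w0 := hmax hw
        linarith
  refine ⟨m, by positivity, c, hc, fun w => ?_⟩
  let W : Rn n := WithLp.toLp 2 w
  have hW : ‖W‖ ^ 2 = ∑ i, w i * w i := by
    rw [EuclideanSpace.real_norm_sq_eq]
    exact Finset.sum_congr rfl fun i _ => sq _
  by_cases h0 : W = 0
  · have : w = 0 := by
      ext i
      exact congrArg (fun x : Rn n => x i) h0
    simp [this]
  have hpos : 0 < ‖W‖ := norm_pos_iff.2 h0
  have h1 := hcF (‖W‖⁻¹ • W) (by simp [norm_smul, hpos.ne'])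
  have h2 : F m (‖W‖⁻¹ • W) = (‖W‖⁻¹) ^ 2 *
      (∑ i, ∑ j, w i * w j * H i j - 2 * m * (∑ i, a i * w i) ^ 2) := by
    unfold F
    have e1 : ∑ i, a i * (‖W‖⁻¹ • W) i = ‖W‖⁻¹ * ∑ i, a i * w i := by
      rw [Finset.mul_sum]
      refine Finset.sum_congr rfl fun i _ => ?_
      simp [W]
      ring
    have e2 : ∑ i, ∑ j, (‖W‖⁻¹ • W) i * (‖W‖⁻¹ • W) j * H i j =
        (‖W‖⁻¹) ^ 2 * ∑ i, ∑ j, w i * w j * H i j := by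
      simp_rw [Finset.mul_sum]
      refine Finset.sum_congr rfl fun i _ => Finset.sum_congr rfl fun j _ => ?_
      simp [W]
      ring
    rw [e1, e2]
    ring
  rw [h2, inv_pow, inv_mul_le_iff₀ (by positivity), hW] at h1
  linarith

theorem sqc_neg {n : ℕ} {f : MvPolynomial (Fin n) ℝ} {u : Rn n}
    (h : StrictlyQuasiConcaveAt f u) (v : Fin n → ℝ) (hv : v ≠ 0)
    (hl : ∑ i, pgrad f u i * v i = 0) : ∑ i, ∑ j, v i * v j * phess f u i j < 0 := by
  have e : ∑ i, ∑ j, v i * v j * phess f u i j = ∑ i, ∑ j, v i * phess f u i j * v j :=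
    Finset.sum_congr rfl fun i _ => Finset.sum_congr rfl fun j _ => by ring
  rw [e]
  rcases h with ⟨_, h⟩ | ⟨_, h⟩
  · linarith [h v hv hl]
  · have := h.dotProduct_mulVec_pos hv
    simp only [dotProduct, Matrix.mulVec, Finset.mul_sum, star_trivial, Matrix.neg_apply] at this
    have e2 : ∑ i, ∑ j, v i * (-phess f u i j * v j) =
        - ∑ i, ∑ j, v i * phess f u i j * v j := by
      simp_rw [← Finset.sum_neg_distrib]
      exact Finset.sum_congr rfl fun i _ => Finset.sum_congr rfl fun j _ => by ring
    rw [e2] at this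
    linarith

theorem continuous_peval {n : ℕ} (f : MvPolynomial (Fin n) ℝ) : Continuous (peval f) := by
  unfold peval
  exact (MvPolynomial.continuous_eval f).comp (by fun_prop)

theorem Box_subset_nhds {n : ℕ} (u : Rn n) (U : Set (Rn n)) (hU : U ∈ nhds u) :
    ∀ᶠ δ in nhdsWithin (0 : ℝ) (Set.Ioi 0), Box u δ ⊆ U := by
  have h1 : (fun y : Fin n → ℝ => (WithLp.toLp 2 y : Rn n)) ⁻¹' U ∈ nhds (fun i => u i) := by
    apply ContinuousAt.preimage_mem_nhds
    · exact (PiLp.continuous_toLp 2 _).continuousAt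
    · exact hU
  obtain ⟨ε, hε, hεU⟩ := Metric.nhds_basis_closedBall.mem_iff.1 h1
  filter_upwards [Ioo_mem_nhdsGT hε] with δ hδ x hx
  have : (fun i => x i) ∈ Metric.closedBall (fun i => u i) ε := by
    rw [Metric.mem_closedBall, dist_pi_le_iff hε.le]
    intro i
    rw [Real.dist_eq]
    exact (hx i).trans hδ.2.le
  exact hεU this

theorem isCompact_Box {n : ℕ} (u : Rn n) (δ : ℝ) : IsCompact (Box u δ) := by
  have : Box u δ = (fun y : Fin n → ℝ => (WithLp.toLp 2 y : Rn n)) ''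
      (Set.pi Set.univ fun i => Set.Icc (u i - δ) (u i + δ)) := by
    ext x
    constructor
    · intro hx
      refine ⟨fun i => x i, fun i _ => ?_, rfl⟩
      have := abs_le.1 (hx i)
      constructor <;> linarith
    · rintro ⟨y, hy, rfl⟩ i
      have := hy i trivial
      rw [abs_le]
      change -δ ≤ y i - u i ∧ y i - u i ≤ δ
      constructor <;> linarith [this.1, this.2]
  rw [this]
  exact (isCompact_univ_pi fun i => isCompact_Icc).image (PiLp.continuous_toLp 2 _)

theorem SDPc.Box {n : ℕ} (u : Rn n) (δ : ℝ) : SDPc (Box u δ) := by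
  have := SDPc.forall Set.univ SDPc.univ (fun i : Fin n => {x : Rn n | |x i - u i| ≤ δ}) (by
    intro i
    have h1 := SDPc.halfspace (EuclideanSpace.proj (𝕜 := ℝ) i : Rn n →L[ℝ] ℝ).toLinearMap (u i + δ)
    have h2 := SDPc.halfspace (-(EuclideanSpace.proj (𝕜 := ℝ) i : Rn n →L[ℝ] ℝ).toLinearMap) (δ - u i)
    convert h1.inter h2 using 1
    ext x
    simp [abs_le]
    constructor
    · rintro ⟨h1, h2⟩
      constructor <;> linarith
    · rintro ⟨h1, h2⟩
      constructor <;> linarith)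
  convert this using 1
  ext x
  simp [_root_.Box]

theorem local_sqc {n : ℕ} (f : MvPolynomial (Fin n) ℝ) (u : Rn n) (hf : peval f u = 0)
    (h : StrictlyQuasiConcaveAt f u) :
    ∀ᶠ δ in nhdsWithin (0 : ℝ) (Set.Ioi 0), SDPc (Box u δ ∩ {x | 0 ≤ peval f x}) := by
  obtain ⟨M, hM, c, hc, hq⟩ := finsler (pgrad f u) (phess f u) (sqc_neg h)
  have hg : ∀ i j, eval (fun k => u k) (pderiv i (pderiv j (f - C M * (f * f)))) =
      phess f u i j - 2 * M * (pgrad f u i * pgrad f u j) := by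
    intro i j
    have hf' : eval (fun k => u k) f = 0 := hf
    simp only [phess, pgrad, Matrix.of_apply, map_sub, Derivation.leibniz, smul_eq_mul,
      pderiv_C, map_add, map_mul, eval_C, hf', mul_zero, zero_mul, add_zero, zero_add]
    ring
  obtain ⟨δ₀, hδ₀, hS⟩ := SDPc.strictConcave (f - C M * (f * f)) u c hc (by
    intro w
    refine le_trans (le_of_eq ?_) (hq w)
    simp_rw [hg]
    rw [sq, Finset.sum_mul_sum, Finset.mul_sum, ← Finset.sum_sub_distrib]
    refine Finset.sum_congr rfl fun i _ => ?_
    rw [Finset.mul_sum, ← Finset.sum_sub_distrib]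
    refine Finset.sum_congr rfl fun j _ => ?_
    ring)
  have hU : {x | M * peval f x < 1} ∈ nhds u := by
    refine (isOpen_lt ((continuous_peval f).const_mul M) continuous_const).mem_nhds ?_
    change M * peval f u < 1
    simp [hf]
  filter_upwards [Box_subset_nhds u _ hU, Ioc_mem_nhdsGT hδ₀] with δ h1 h2
  convert hS δ h2.1 h2.2 using 1
  ext x
  refine and_congr_right fun hx => ?_
  have hx' : M * peval f x < 1 := h1 hx
  change 0 ≤ peval f x ↔ 0 ≤ peval (f - C M * (f * f)) x
  have e : peval (f - C M * (f * f)) x = peval f x * (1 - M * peval f x) := by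
    simp only [peval, map_sub, map_mul, eval_C]
    ring
  rw [e, mul_nonneg_iff_of_pos_right (by linarith)]

theorem local_all {n : ℕ} (f : MvPolynomial (Fin n) ℝ) (u : Rn n)
    (h : peval f u = 0 → SosConcave f ∨ StrictlyQuasiConcaveAt f u) :
    ∀ᶠ δ in nhdsWithin (0 : ℝ) (Set.Ioi 0), SDPc (Box u δ ∩ {x | 0 ≤ peval f x}) := by
  rcases lt_trichotomy (peval f u) 0 with h0 | h0 | h0
  · have hU : {x | peval f x < 0} ∈ nhds u :=
      (isOpen_lt (continuous_peval f) continuous_const).mem_nhds h0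
    filter_upwards [Box_subset_nhds u _ hU] with δ h1
    convert SDPc.empty (n := n) using 1
    ext x
    simp only [Set.mem_inter_iff, Set.mem_empty_iff_false, iff_false, not_and]
    intro hx hx2
    have h3 : peval f x < 0 := h1 hx
    have h4 : 0 ≤ peval f x := hx2
    linarith
  · rcases h h0 with h | h
    · exact Eventually.of_forall fun δ => (SDPc.Box u δ).inter (SDPc.sosConcave f h)
    · exact local_sqc f u h0 h
  · have hU : {x | 0 < peval f x} ∈ nhds u :=
      (isOpen_lt continuous_const (continuous_peval f)).mem_nhds h0
    filter_upwards [Box_subset_nhds u _ hU] with δ h1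
    convert SDPc.Box u δ using 1
    refine Set.inter_eq_left.2 fun x hx => ?_
    have h3 : 0 < peval f x := h1 hx
    exact h3.le

theorem isCompact_convexBoundary {n : ℕ} {T : Set (Rn n)} (hT : IsCompact T) :
    IsCompact (convexBoundary T) := by
  have h1 : IsCompact ((T ×ˢ sphere (0 : Rn n) 1) ∩
      {p : Rn n × Rn n | ∀ x ∈ T, ∑ i, p.2 i * p.1 i ≤ ∑ i, p.2 i * x i}) := by
    refine (hT.prod (isCompact_sphere _ _)).inter_right ?_
    have : {p : Rn n × Rn n | ∀ x ∈ T, ∑ i, p.2 i * p.1 i ≤ ∑ i, p.2 i * x i} =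
        ⋂ x ∈ T, {p : Rn n × Rn n | ∑ i, p.2 i * p.1 i ≤ ∑ i, p.2 i * x i} := by
      ext p
      simp
    rw [this]
    refine isClosed_biInter fun x _ => isClosed_le ?_ ?_ <;> fun_prop
  convert h1.image continuous_fst using 1
  ext u
  constructor
  · rintro ⟨hu, l, hl, hx⟩
    exact ⟨(u, l), ⟨⟨hu, by simpa using hl⟩, hx⟩, rfl⟩
  · rintro ⟨⟨u, l⟩, ⟨⟨hu, hl⟩, hx⟩, rfl⟩
    exact ⟨hu, l, by simpa using hl, hx⟩

theorem Box_mem_nhds {n : ℕ} (u : Rn n) {δ : ℝ} (hδ : 0 < δ) : Box u δ ∈ nhds u := by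
  have : Box u δ = ⋂ i, {x : Rn n | |x i - u i| ≤ δ} := by
    ext x
    simp [Box]
  rw [this, Filter.iInter_mem]
  intro i
  have h1 : {x : Rn n | |x i - u i| < δ} ∈ nhds u :=
    (isOpen_lt (by fun_prop) continuous_const).mem_nhds (by simpa using hδ)
  refine Filter.mem_of_superset h1 fun x hx => ?_
  have h3 : |x i - u i| < δ := hx
  exact h3.le

/-- A compact convex set containing the convex boundary contains the set. -/
theorem subset_of_convexBoundary {n : ℕ} (hn : 0 < n) {T K : Set (Rn n)} (hT : IsCompact T)
    (hK : IsCompact K) (hKc : Convex ℝ K) (hb : convexBoundary T ⊆ K) : T ⊆ K := by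
  intro x hx
  by_contra hxK
  have hmin : ∀ l : Rn n, l ≠ 0 → ∃ u ∈ convexBoundary T, ∀ y ∈ T,
      ∑ i, l i * u i ≤ ∑ i, l i * y i := by
    intro l hl
    have hp : 0 < ‖l‖ := norm_pos_iff.2 hl
    obtain ⟨u, hu, hmin⟩ := hT.exists_isMinOn ⟨x, hx⟩
      (f := fun y : Rn n => ∑ i, l i * y i) (by fun_prop)
    have hmin' : ∀ y ∈ T, ∑ i, l i * u i ≤ ∑ i, l i * y i := fun y hy => hmin hy
    refine ⟨u, ⟨hu, ‖l‖⁻¹ • l, by simp [norm_smul, hp.ne'], fun y hy => ?_⟩, hmin'⟩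
    have e : ∀ z : Rn n, ∑ i, (‖l‖⁻¹ • l) i * z i = ‖l‖⁻¹ * ∑ i, l i * z i := by
      intro z
      rw [Finset.mul_sum]
      refine Finset.sum_congr rfl fun i _ => ?_
      simp
      ring
    rw [e, e]
    exact mul_le_mul_of_nonneg_left (hmin' y hy) (by positivity)
  obtain ⟨φ, s, h1, h2⟩ := geometric_hahn_banach_point_closed hKc hK.isClosed hxK
  let l : Rn n := (InnerProductSpace.toDual ℝ (Rn n)).symm φ
  have hφ : ∀ y, φ y = ∑ i, l i * y i := by
    intro y
    rw [← InnerProductSpace.toDual_symm_apply (𝕜 := ℝ) (y := φ)]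
    change inner ℝ l y = _
    rw [PiLp.inner_apply]
    refine Finset.sum_congr rfl fun i _ => ?_
    simp [mul_comm]
  by_cases hl : l = 0
  · have hne : (EuclideanSpace.single (⟨0, hn⟩ : Fin n) (1 : ℝ)) ≠ 0 := by
      intro h0
      have := congrArg norm h0
      simp at this
    obtain ⟨u, hu, _⟩ := hmin _ hne
    have h3 := h2 u (hb hu)
    rw [hφ, hl] at h1 h3
    simp at h1 h3
    linarith
  · obtain ⟨u, hu, hu2⟩ := hmin l hl
    have h3 := h2 u (hb hu)
    have h4 := hu2 x hx
    rw [← hφ, ← hφ] at h4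
    linarith

/-- sufficient conditions for SDP representability of the convex hull
of a compact union of basic closed semialgebraic sets. -/
theorem isSDPRepresentable_convexHull_union_basic {n L : ℕ}
    (mk : Fin L → ℕ) (f : ∀ k, Fin (mk k) → MvPolynomial (Fin n) ℝ)
    (T : Fin L → Set (Rn n))
    (hT : ∀ k, T k = {x : Rn n | ∀ i, 0 ≤ peval (f k i) x})
    (Tun : Set (Rn n)) (hTun : Tun = ⋃ k, T k) (hcpt : IsCompact Tun)
    (h : ∀ u ∈ convexBoundary Tun, ∀ (k : Fin L) (i : Fin (mk k)), peval (f k i) u = 0 →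
      (∀ δ > 0, ∃ v ∈ ball u δ, ∀ j, 0 < peval (f k j) v) ∧
      (SosConcave (f k i) ∨ StrictlyQuasiConcaveAt (f k i) u)) :
    IsSDPRepresentable (convexHull ℝ Tun) := by
  apply SDPc.isSDPRepresentable
  rcases Nat.eq_zero_or_pos n with rfl | hn
  · rcases (convexHull ℝ Tun).eq_empty_or_nonempty with h0 | ⟨x, hx⟩
    · rw [h0]
      exact SDPc.empty
    · have : convexHull ℝ Tun = Set.univ := by
        ext y
        simp only [Set.mem_univ, iff_true]
        rwa [Subsingleton.elim y x]
      rw [this]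
      exact SDPc.univ
  have hcl : ∀ k, IsClosed (T k) := by
    intro k
    rw [hT k]
    have : {x : Rn n | ∀ i, 0 ≤ peval (f k i) x} = ⋂ i, {x : Rn n | 0 ≤ peval (f k i) x} := by
      ext x
      simp
    rw [this]
    exact isClosed_iInter fun i => isClosed_le continuous_const (continuous_peval _)
  have hloc : ∀ u ∈ convexBoundary Tun, ∃ δ > 0, ∀ k, SDPc (Box u δ ∩ T k) := by
    intro u hu
    have h1 : ∀ᶠ δ in nhdsWithin (0 : ℝ) (Set.Ioi 0), ∀ k, ∀ i,
        SDPc (Box u δ ∩ {x | 0 ≤ peval (f k i) x}) :=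
      Filter.eventually_all.2 fun k => Filter.eventually_all.2 fun i =>
        local_all (f k i) u fun h0 => (h u hu k i h0).2
    obtain ⟨δ, hδ, hδ0⟩ := (h1.and self_mem_nhdsWithin).exists
    refine ⟨δ, hδ0, fun k => ?_⟩
    have h2 := SDPc.forall (Box u δ) (SDPc.Box u δ)
      (fun i => Box u δ ∩ {x | 0 ≤ peval (f k i) x}) (hδ k)
    convert h2 using 1
    rw [hT k]
    ext x
    constructor
    · rintro ⟨hx, hx2⟩
      exact ⟨hx, fun i => ⟨hx, hx2 i⟩⟩
    · rintro ⟨hx, hx2⟩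
      exact ⟨hx, fun i => (hx2 i).2⟩
  choose! δ hδ hS using hloc
  obtain ⟨t, htb, ht⟩ := (isCompact_convexBoundary hcpt).elim_nhds_subcover (fun u => Box u (δ u))
    fun u hu => Box_mem_nhds u (hδ u hu)
  obtain ⟨hK1, hK2⟩ := SDPc.convexHull_finset (t ×ˢ (Finset.univ : Finset (Fin L)))
    (fun p => Box p.1 (δ p.1) ∩ T p.2)
    (fun p hp => hS p.1 (htb p.1 (Finset.mem_product.1 hp).1) p.2)
    (fun p _ => (isCompact_Box _ _).inter_right (hcl p.2))
  have hsub : (⋃ p ∈ t ×ˢ (Finset.univ : Finset (Fin L)), Box p.1 (δ p.1) ∩ T p.2) ⊆ Tun := by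
    refine Set.iUnion₂_subset fun p _ => ?_
    rw [hTun]
    exact Set.inter_subset_right.trans (Set.subset_iUnion T p.2)
  have hb : convexBoundary Tun ⊆
      convexHull ℝ (⋃ p ∈ t ×ˢ (Finset.univ : Finset (Fin L)), Box p.1 (δ p.1) ∩ T p.2) := by
    intro x hx
    apply subset_convexHull
    obtain ⟨u, hu, hxu⟩ := Set.mem_iUnion₂.1 (ht hx)
    have hxT : x ∈ Tun := hx.1
    rw [hTun] at hxT
    obtain ⟨k, hk⟩ := Set.mem_iUnion.1 hxT
    exact Set.mem_iUnion₂.2 ⟨(u, k), by simp [hu], hxu, hk⟩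
  have hTK := subset_of_convexBoundary hn hcpt hK2 (convex_convexHull ℝ _) hb
  have : convexHull ℝ Tun =
      convexHull ℝ (⋃ p ∈ t ×ˢ (Finset.univ : Finset (Fin L)), Box p.1 (δ p.1) ∩ T p.2) :=
    Set.Subset.antisymm (convexHull_min hTK (convex_convexHull ℝ _)) (convexHull_mono hsub)
  rw [this]
  exact hK1
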